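/- Theorem 1: Under Assumption A, the combined importance-sampling/control-variate estimator T'(Y) = T(Y) − (Z(Y) − P(γ)) (i.e. β = −1) has asymptotically vanishing relative error: limsup_{γ → 0} var_g[T'(Y)] / α(γ)² = 0. In particular, var_g[T'] / α² ≤ C₄ γ^{a_{i₀}/2} (log(1/γ))^{3/2} + o(1) as γ → 0 for some constant C₄. -/

import Mathlib

open MeasureTheory Matrix Real Filter

noncomputable def mvnPdf {n : ℕ} (m : Fin n → ℝ) (S : Matrix (Fin n) (Fin n) ℝ)
    (y : Fin n → ℝ) : ℝ :=
  Real.exp (-(1/2) * ((y - m) ⬝ᵥ S⁻¹.mulVec (y - m))) / Real.sqrt ((2 * Real.pi) ^ n * S.det)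

noncomputable def stdNormCDF (x : ℝ) : ℝ :=
  ∫ t in Set.Iic x, Real.exp (-t ^ 2 / 2) / Real.sqrt (2 * Real.pi)

open ProbabilityTheory
open scoped NNReal ENNReal

lemma mulVec_dotProduct_self_le {ι : Type*} [Fintype ι] (B : Matrix ι ι ℝ) (x : ι → ℝ) :
    B.mulVec x ⬝ᵥ B.mulVec x ≤ (∑ i, ∑ j, B i j ^ 2) * (x ⬝ᵥ x) := by
  rw [Finset.sum_mul]
  simp only [dotProduct, Matrix.mulVec, ← pow_two]
  exact Finset.sum_le_sum fun i _ => Finset.sum_mul_sq_le_sq_mul_sq _ _ _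

open scoped MatrixOrder in
lemma Matrix.PosDef.exists_quadraticForm_bounds {ι : Type*} [Fintype ι] [DecidableEq ι]
    {A : Matrix ι ι ℝ} (hA : A.PosDef) :
    ∃ d D : ℝ, 0 < d ∧ 0 < D ∧ ∀ x : ι → ℝ,
      d * (x ⬝ᵥ x) ≤ x ⬝ᵥ A.mulVec x ∧ x ⬝ᵥ A.mulVec x ≤ D * (x ⬝ᵥ x) := by
  obtain ⟨B, hB⟩ := CStarAlgebra.nonneg_iff_eq_star_mul_self.mp hA.posSemidef.nonneg
  have hBdet : IsUnit B.det := by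
    have := hA.det_pos
    rw [hB, Matrix.det_mul] at this
    exact isUnit_iff_ne_zero.mpr (right_ne_zero_of_mul this.ne')
  have hq (x : ι → ℝ) : x ⬝ᵥ A.mulVec x = B.mulVec x ⬝ᵥ B.mulVec x := by
    rw [hB, ← Matrix.mulVec_mulVec, Matrix.dotProduct_mulVec, Matrix.star_eq_conjTranspose,
      Matrix.conjTranspose_eq_transpose_of_trivial, Matrix.vecMul_transpose]
  have hpos (M : Matrix ι ι ℝ) : 0 ≤ ∑ i, ∑ j, M i j ^ 2 := by positivity
  refine ⟨(1 + ∑ i, ∑ j, B⁻¹ i j ^ 2)⁻¹, 1 + ∑ i, ∑ j, B i j ^ 2,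
    inv_pos.mpr (by linarith [hpos B⁻¹]), by linarith [hpos B], fun x => ?_⟩
  have hxx (y : ι → ℝ) : 0 ≤ y ⬝ᵥ y := Finset.sum_nonneg fun i _ => mul_self_nonneg _
  rw [hq]
  constructor
  · have h := mulVec_dotProduct_self_le B⁻¹ (B.mulVec x)
    rw [Matrix.mulVec_mulVec, Matrix.nonsing_inv_mul B hBdet, Matrix.one_mulVec] at h
    rw [inv_mul_le_iff₀ (by linarith [hpos B⁻¹])]
    linarith [hxx (B.mulVec x)]
  · linarith [mulVec_dotProduct_self_le B x, hxx x]

lemma pi_gaussianReal_eq_withDensity {ι : Type*} [Fintype ι] {v : ℝ≥0} (hv : v ≠ 0) :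
    Measure.pi (fun _ : ι => gaussianReal 0 v) =
      (volume : Measure (ι → ℝ)).withDensity
        fun x => ENNReal.ofReal (∏ i, gaussianPDFReal 0 v (x i)) := by
  refine (Measure.pi_eq fun s hs => ?_)
  have hind (x : ι → ℝ) :
      (Set.univ.pi s).indicator (fun x => ENNReal.ofReal (∏ i, gaussianPDFReal 0 v (x i))) x =
        ENNReal.ofReal (∏ i, (s i).indicator (gaussianPDFReal 0 v) (x i)) := by
    by_cases hx : x ∈ Set.univ.pi s
    · rw [Set.indicator_of_mem hx]
      congr 1
      exact Finset.prod_congr rfl fun i _ => (Set.indicator_of_mem (hx i trivial) _).symm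
    · rw [Set.indicator_of_notMem hx]
      obtain ⟨i, hi⟩ : ∃ i, x i ∉ s i := by simpa [Set.mem_pi] using hx
      rw [Finset.prod_eq_zero (Finset.mem_univ i) (Set.indicator_of_notMem hi _),
        ENNReal.ofReal_zero]
  have hint (i : ι) : Integrable ((s i).indicator (gaussianPDFReal 0 v)) :=
    (integrable_gaussianPDFReal 0 v).indicator (hs i)
  have hnn (i : ι) (y : ℝ) : 0 ≤ (s i).indicator (gaussianPDFReal 0 v) y :=
    Set.indicator_nonneg (fun y _ => gaussianPDFReal_nonneg 0 v y) y
  rw [withDensity_apply _ (MeasurableSet.univ_pi hs),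
    ← lintegral_indicator (MeasurableSet.univ_pi hs)]
  simp_rw [hind]
  rw [← ofReal_integral_eq_lintegral_ofReal (volume_pi (α := fun _ : ι => ℝ) ▸
    Integrable.fintype_prod hint)
    (Filter.Eventually.of_forall fun x => Finset.prod_nonneg fun i _ => hnn i _),
    integral_fintype_prod_volume_eq_prod,
    ENNReal.ofReal_prod_of_nonneg fun i _ => integral_nonneg (hnn i)]
  refine Finset.prod_congr rfl fun i _ => ?_
  rw [gaussianReal_apply_eq_integral 0 hv, integral_indicator (hs i)]

lemma pi_gaussianReal_eval {ι : Type*} [Fintype ι] (v : ℝ≥0) (i : ι) {s : Set ℝ}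
    (hs : MeasurableSet s) :
    Measure.pi (fun _ : ι => gaussianReal 0 v) {x | x i ∈ s} = gaussianReal 0 v s :=
  (measurePreserving_eval (fun _ : ι => gaussianReal 0 v) i).measure_preimage hs.nullMeasurableSet

lemma prod_gaussianPDFReal {ι : Type*} [Fintype ι] (v : ℝ≥0) (x : ι → ℝ) :
    ∏ i, gaussianPDFReal 0 v (x i) =
      (√(2 * π * v))⁻¹ ^ Fintype.card ι * Real.exp (-(x ⬝ᵥ x) / (2 * v)) := by
  simp only [gaussianPDFReal, sub_zero, Finset.prod_mul_distrib, Finset.prod_const,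
    Finset.card_univ, ← Real.exp_sum, dotProduct, ← Finset.sum_div, Finset.sum_neg_distrib, pow_two]

noncomputable def centeredMvn {n : ℕ} (S : Matrix (Fin n) (Fin n) ℝ) : Measure (Fin n → ℝ) :=
  volume.withDensity fun x => ENNReal.ofReal (mvnPdf 0 S x)

lemma continuous_mvnPdf {n : ℕ} (m : Fin n → ℝ) (S : Matrix (Fin n) (Fin n) ℝ) :
    Continuous (mvnPdf m S) := by
  unfold mvnPdf
  fun_prop

lemma exists_mvnPdf_zero_le {n : ℕ} {S : Matrix (Fin n) (Fin n) ℝ} (hS : S.PosDef) :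
    ∃ C : ℝ, ∃ v : ℝ≥0, 0 < C ∧ v ≠ 0 ∧
      ∀ x, mvnPdf 0 S x ≤ C * ∏ i, gaussianPDFReal 0 v (x i) := by
  obtain ⟨d, _, hd, _, h⟩ := hS.inv.exists_quadraticForm_bounds
  have hdet : 0 < √((2 * π) ^ n * S.det) :=
    Real.sqrt_pos.mpr (mul_pos (by positivity) hS.det_pos)
  set v : ℝ≥0 := ⟨d⁻¹, by positivity⟩
  have hvv : (v : ℝ) = d⁻¹ := rfl
  have hv0 : 0 < (v : ℝ) := by rw [hvv]; positivity
  refine ⟨(√((2 * π) ^ n * S.det))⁻¹ * √(2 * π * v) ^ n, v, by positivity,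
    by exact_mod_cast hv0.ne', fun x => ?_⟩
  rw [prod_gaussianPDFReal, Fintype.card_fin, inv_pow, mul_assoc,
    mul_inv_cancel_left₀ (by positivity), mvnPdf, div_eq_inv_mul]
  gcongr
  rw [hvv, sub_zero]
  have := (h x).1
  field_simp
  linarith

lemma exists_le_mvnPdf_zero {n : ℕ} {S : Matrix (Fin n) (Fin n) ℝ} (hS : S.PosDef) :
    ∃ C : ℝ, ∃ v : ℝ≥0, 0 < C ∧ v ≠ 0 ∧
      ∀ x, C * ∏ i, gaussianPDFReal 0 v (x i) ≤ mvnPdf 0 S x := by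
  obtain ⟨_, d, _, hd, h⟩ := hS.inv.exists_quadraticForm_bounds
  have hdet : 0 < √((2 * π) ^ n * S.det) :=
    Real.sqrt_pos.mpr (mul_pos (by positivity) hS.det_pos)
  set v : ℝ≥0 := ⟨d⁻¹, by positivity⟩
  have hvv : (v : ℝ) = d⁻¹ := rfl
  have hv0 : 0 < (v : ℝ) := by rw [hvv]; positivity
  refine ⟨(√((2 * π) ^ n * S.det))⁻¹ * √(2 * π * v) ^ n, v, by positivity,
    by exact_mod_cast hv0.ne', fun x => ?_⟩
  rw [prod_gaussianPDFReal, Fintype.card_fin, inv_pow, mul_assoc,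
    mul_inv_cancel_left₀ (by positivity), mvnPdf,
    div_eq_inv_mul _ √((2 * π) ^ n * S.det)]
  refine mul_le_mul_of_nonneg_left (Real.exp_le_exp.mpr ?_) (by positivity)
  rw [hvv, sub_zero]
  have := (h x).2
  field_simp
  linarith

lemma exists_centeredMvn_le {n : ℕ} {S : Matrix (Fin n) (Fin n) ℝ} (hS : S.PosDef) :
    ∃ C : ℝ, ∃ v : ℝ≥0, 0 < C ∧ v ≠ 0 ∧
      centeredMvn S ≤ ENNReal.ofReal C • Measure.pi (fun _ => gaussianReal 0 v) := by
  obtain ⟨C, v, hC, hv, h⟩ := exists_mvnPdf_zero_le hS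
  refine ⟨C, v, hC, hv, ?_⟩
  rw [pi_gaussianReal_eq_withDensity hv, ← withDensity_smul' _ _ ENNReal.ofReal_ne_top]
  refine withDensity_mono (Filter.Eventually.of_forall fun x => ?_)
  simp only [Pi.smul_apply, smul_eq_mul, ← ENNReal.ofReal_mul hC.le]
  exact ENNReal.ofReal_le_ofReal (h x)

lemma exists_le_centeredMvn {n : ℕ} {S : Matrix (Fin n) (Fin n) ℝ} (hS : S.PosDef) :
    ∃ C : ℝ, ∃ v : ℝ≥0, 0 < C ∧ v ≠ 0 ∧
      ENNReal.ofReal C • Measure.pi (fun _ => gaussianReal 0 v) ≤ centeredMvn S := by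
  obtain ⟨C, v, hC, hv, h⟩ := exists_le_mvnPdf_zero hS
  refine ⟨C, v, hC, hv, ?_⟩
  rw [pi_gaussianReal_eq_withDensity hv, ← withDensity_smul' _ _ ENNReal.ofReal_ne_top]
  refine withDensity_mono (Filter.Eventually.of_forall fun x => ?_)
  simp only [Pi.smul_apply, smul_eq_mul, ← ENNReal.ofReal_mul hC.le]
  exact ENNReal.ofReal_le_ofReal (h x)

lemma isFiniteMeasure_centeredMvn {n : ℕ} {S : Matrix (Fin n) (Fin n) ℝ} (hS : S.PosDef) :
    IsFiniteMeasure (centeredMvn S) := by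
  obtain ⟨C, v, -, -, h⟩ := exists_centeredMvn_le hS
  have := Measure.smul_finite (Measure.pi fun _ : Fin n => gaussianReal 0 v)
    (ENNReal.ofReal_ne_top (r := C))
  exact isFiniteMeasure_of_le _ h

lemma gaussianReal_real_Icc_le {v : ℝ≥0} (hv : v ≠ 0) {a b : ℝ} (hab : a ≤ b) :
    (gaussianReal 0 v).real (Set.Icc a b) ≤ (√(2 * π * v))⁻¹ * (b - a) := by
  rw [measureReal_def, gaussianReal_apply_eq_integral 0 hv,
    ENNReal.toReal_ofReal (integral_nonneg fun x => gaussianPDFReal_nonneg 0 v x)]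
  calc ∫ x in Set.Icc a b, gaussianPDFReal 0 v x
      ≤ ∫ x in Set.Icc a b, (√(2 * π * v))⁻¹ := by
        refine setIntegral_mono_on (integrable_gaussianPDFReal 0 v).integrableOn
          (integrableOn_const (by simp)) measurableSet_Icc fun x _ => ?_
        refine mul_le_of_le_one_right (by positivity) (Real.exp_le_one_iff.mpr ?_)
        rw [neg_div]
        exact neg_nonpos.mpr (by positivity)
    _ = (√(2 * π * v))⁻¹ * (b - a) := by
        rw [setIntegral_const, Real.volume_real_Icc_of_le hab, smul_eq_mul, mul_comm]

lemma le_gaussianReal_real_Icc {v : ℝ≥0} (hv : v ≠ 0) {a b r : ℝ} (hab : a ≤ b)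
    (ha : -r ≤ a) (hb : b ≤ r) :
    gaussianPDFReal 0 v r * (b - a) ≤ (gaussianReal 0 v).real (Set.Icc a b) := by
  rw [measureReal_def, gaussianReal_apply_eq_integral 0 hv,
    ENNReal.toReal_ofReal (integral_nonneg fun x => gaussianPDFReal_nonneg 0 v x)]
  calc gaussianPDFReal 0 v r * (b - a) = ∫ x in Set.Icc a b, gaussianPDFReal 0 v r := by
        rw [setIntegral_const, Real.volume_real_Icc_of_le hab, smul_eq_mul, mul_comm]
    _ ≤ ∫ x in Set.Icc a b, gaussianPDFReal 0 v x := by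
        refine setIntegral_mono_on (integrableOn_const (by simp))
          (integrable_gaussianPDFReal 0 v).integrableOn measurableSet_Icc fun x hx => ?_
        simp only [gaussianPDFReal, sub_zero]
        gcongr ?_ * Real.exp (-?_ / _)
        exact sq_le_sq' (ha.trans hx.1) (hx.2.trans hb)

lemma centeredMvn_marginal_le {n : ℕ} {S : Matrix (Fin n) (Fin n) ℝ} (hS : S.PosDef) :
    ∃ C : ℝ, ∃ v : ℝ≥0, 0 < C ∧ v ≠ 0 ∧ ∀ i, ∀ s, MeasurableSet s →
      (centeredMvn S).real {x | x i ∈ s} ≤ C * (gaussianReal 0 v).real s := by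
  obtain ⟨C, v, hC, hv, h⟩ := exists_centeredMvn_le hS
  refine ⟨C, v, hC, hv, fun i s hs => ?_⟩
  have := h {x | x i ∈ s}
  rw [Measure.smul_apply, smul_eq_mul, pi_gaussianReal_eval v i hs] at this
  simpa [measureReal_def, ENNReal.toReal_mul, hC.le] using
    ENNReal.toReal_mono (ENNReal.mul_ne_top ENNReal.ofReal_ne_top (measure_ne_top _ _)) this

lemma le_centeredMvn_marginal {n : ℕ} {S : Matrix (Fin n) (Fin n) ℝ} (hS : S.PosDef) :
    ∃ C : ℝ, ∃ v : ℝ≥0, 0 < C ∧ v ≠ 0 ∧ ∀ i, ∀ s, MeasurableSet s →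
      C * (gaussianReal 0 v).real s ≤ (centeredMvn S).real {x | x i ∈ s} := by
  obtain ⟨C, v, hC, hv, h⟩ := exists_le_centeredMvn hS
  have := isFiniteMeasure_centeredMvn hS
  refine ⟨C, v, hC, hv, fun i s hs => ?_⟩
  have := h {x | x i ∈ s}
  rw [Measure.smul_apply, smul_eq_mul, pi_gaussianReal_eval v i hs] at this
  simpa [measureReal_def, ENNReal.toReal_mul, hC.le] using
    ENNReal.toReal_mono (measure_ne_top _ _) this

lemma exists_centeredMvn_Icc_le {n : ℕ} {S : Matrix (Fin n) (Fin n) ℝ} (hS : S.PosDef) :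
    ∃ C : ℝ, ∀ i a b, a ≤ b →
      (centeredMvn S).real {x | x i ∈ Set.Icc a b} ≤ C * (b - a) := by
  obtain ⟨C, v, hC, hv, h⟩ := centeredMvn_marginal_le hS
  refine ⟨C * (√(2 * π * v))⁻¹, fun i a b hab => (h i _ measurableSet_Icc).trans ?_⟩
  rw [mul_assoc]
  gcongr
  exact gaussianReal_real_Icc_le hv hab

lemma exists_centeredMvn_Ici_le {n : ℕ} {S : Matrix (Fin n) (Fin n) ℝ} (hS : S.PosDef) :
    ∃ C : ℝ, ∀ i r, (centeredMvn S).real {x | x i ∈ Set.Ici r} ≤ C * Real.exp (-r) := by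
  obtain ⟨C, v, hC, hv, h⟩ := centeredMvn_marginal_le hS
  refine ⟨C * mgf id (gaussianReal 0 v) 1, fun i r => (h i _ measurableSet_Ici).trans ?_⟩
  have := measure_ge_le_exp_mul_mgf (μ := gaussianReal 0 v) (X := id) (t := 1) r zero_le_one
    (by simpa using integrable_exp_mul_gaussianReal (μ := 0) (v := v) 1)
  rw [mul_assoc]
  gcongr
  rw [neg_one_mul] at this
  rw [mul_comm]
  exact this

lemma exists_le_centeredMvn_Icc {n : ℕ} {S : Matrix (Fin n) (Fin n) ℝ} (hS : S.PosDef) (r : ℝ) :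
    ∃ c : ℝ, 0 < c ∧ ∀ i a b, a ≤ b → -r ≤ a → b ≤ r →
      c * (b - a) ≤ (centeredMvn S).real {x | x i ∈ Set.Icc a b} := by
  obtain ⟨C, v, hC, hv, h⟩ := le_centeredMvn_marginal hS
  refine ⟨C * gaussianPDFReal 0 v r, mul_pos hC (gaussianPDFReal_pos 0 v r hv),
    fun i a b hab ha hb => le_trans ?_ (h i _ measurableSet_Icc)⟩
  rw [mul_assoc]
  gcongr
  exact le_gaussianReal_real_Icc hv hab ha hb

section TailAsymptotics

variable {ι : Type*} [Fintype ι]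

def expSumLe (a b : ι → ℝ) (s : ℝ) : Set (ι → ℝ) :=
  {x | ∑ i, Real.exp (x i + b i - a i * s) ≤ 1}

lemma measurableSet_expSumLe (a b : ι → ℝ) (s : ℝ) : MeasurableSet (expSumLe a b s) :=
  measurableSet_le (by fun_prop) measurable_const

lemma expSumLe_subset {a b : ι → ℝ} {o : ι} (hao : a o = 0) (hbo : b o = 0) (s : ℝ) :
    expSumLe a b s ⊆ {x | x o ≤ 0} := fun x hx => by
  have h : Real.exp (x o + b o - a o * s) ≤ ∑ i, Real.exp (x i + b i - a i * s) :=
    Finset.single_le_sum (f := fun i => Real.exp (x i + b i - a i * s))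
      (fun i _ => (Real.exp_pos _).le) (Finset.mem_univ o)
  have := h.trans hx
  rw [hao, hbo] at this
  simpa using this

variable [DecidableEq ι] {ν : Measure (ι → ℝ)} [IsFiniteMeasure ν] {o : ι} {a b : ι → ℝ}

lemma tendsto_sq_mul_measure_sdiff_expSumLe
    {C : ℝ} (hT : ∀ i r, ν.real {x | x i ∈ Set.Ici r} ≤ C * Real.exp (-r))
    (hao : a o = 0) (hbo : b o = 0) (ha : ∀ i ≠ o, 0 < a i) :
    Tendsto (fun s : ℝ => s ^ 2 * ν.real ({x | x o ≤ -(s ^ 3)⁻¹} \ expSumLe a b s))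
      atTop (nhds 0) := by
  have hdecay (k : ℕ) {i : ι} (hi : i ∈ Finset.univ.erase o) :
      Tendsto (fun s : ℝ => s ^ k * Real.exp (-(a i / 2) * s)) atTop (nhds 0) := by
    simpa using tendsto_rpow_mul_exp_neg_mul_atTop_nhds_zero (k : ℝ) (a i / 2)
      (half_pos (ha i (Finset.ne_of_mem_erase hi)))
  have hsum : Tendsto (fun s : ℝ => ∑ i ∈ Finset.univ.erase o,
      Real.exp (b i) * (s ^ 3 * Real.exp (-(a i / 2) * s))) atTop (nhds 0) := by
    simpa using tendsto_finsetSum (Finset.univ.erase o)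
      fun i hi => (hdecay 3 hi).const_mul (Real.exp (b i))
  have hbound : Tendsto (fun s : ℝ => ∑ i ∈ Finset.univ.erase o,
      C * (s ^ 2 * Real.exp (-(a i / 2) * s))) atTop (nhds 0) := by
    simpa using tendsto_finsetSum (Finset.univ.erase o) fun i hi => (hdecay 2 hi).const_mul C
  refine squeeze_zero' (Filter.Eventually.of_forall fun s => by positivity) ?_ hbound
  filter_upwards [hsum.eventually_lt_const (show (0 : ℝ) < 1 / 2 by norm_num),
    eventually_ge_atTop 1] with s hs hs1
  have hs3 : 1 ≤ s ^ 3 := one_le_pow₀ hs1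
  have hsub : {x | x o ≤ -(s ^ 3)⁻¹} \ expSumLe a b s ⊆
      ⋃ i ∈ Finset.univ.erase o, {x | x i ∈ Set.Ici (a i / 2 * s)} := by
    rintro x ⟨hxo, hx⟩
    by_contra hcon
    simp only [Set.mem_iUnion, not_exists, Set.mem_ofPred_eq, Set.mem_Ici, not_le] at hcon
    refine hx ?_
    simp only [expSumLe, Set.mem_ofPred_eq, ← Finset.add_sum_erase _ _ (Finset.mem_univ o), hao,
      hbo, add_zero, zero_mul, sub_zero]
    have h1 : Real.exp (x o) ≤ 1 - (s ^ 3)⁻¹ / 2 := by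
      have hle : (s ^ 3)⁻¹ ≤ 1 := inv_le_one_of_one_le₀ hs3
      have hpos : 0 < (s ^ 3)⁻¹ := by positivity
      calc Real.exp (x o) ≤ Real.exp (-(s ^ 3)⁻¹) := Real.exp_le_exp.mpr hxo
        _ = (Real.exp ((s ^ 3)⁻¹))⁻¹ := Real.exp_neg _
        _ ≤ ((s ^ 3)⁻¹ + 1)⁻¹ := inv_anti₀ (by positivity) (Real.add_one_le_exp _)
        _ ≤ 1 - (s ^ 3)⁻¹ / 2 := by
          rw [inv_le_iff_one_le_mul₀ (by positivity)]
          nlinarith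
    have h2 : ∑ i ∈ Finset.univ.erase o, Real.exp (x i + b i - a i * s) ≤ (s ^ 3)⁻¹ / 2 := by
      calc ∑ i ∈ Finset.univ.erase o, Real.exp (x i + b i - a i * s)
          ≤ ∑ i ∈ Finset.univ.erase o, (s ^ 3)⁻¹ *
              (Real.exp (b i) * (s ^ 3 * Real.exp (-(a i / 2) * s))) := by
            refine Finset.sum_le_sum fun i hi => ?_
            rw [mul_left_comm (Real.exp (b i)), inv_mul_cancel_left₀ (by positivity),
              ← Real.exp_add]
            exact Real.exp_le_exp.mpr (by linarith [hcon i hi])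
        _ ≤ (s ^ 3)⁻¹ * (1 / 2) := by
            rw [← Finset.mul_sum]
            gcongr
        _ = (s ^ 3)⁻¹ / 2 := by ring
    linarith
  calc s ^ 2 * ν.real ({x | x o ≤ -(s ^ 3)⁻¹} \ expSumLe a b s)
      ≤ s ^ 2 * ∑ i ∈ Finset.univ.erase o, C * Real.exp (-(a i / 2 * s)) := by
        gcongr
        exact (measureReal_mono hsub (measure_ne_top _ _)).trans ((measureReal_biUnion_finset_le _ _).trans
          (Finset.sum_le_sum fun i _ => hT i _))
    _ = ∑ i ∈ Finset.univ.erase o, C * (s ^ 2 * Real.exp (-(a i / 2) * s)) := by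
        rw [Finset.mul_sum]
        exact Finset.sum_congr rfl fun i _ => by rw [neg_mul]; ring

lemma tendsto_sq_mul_measure_nonpos_sdiff_expSumLe
    {C C' : ℝ} (hT : ∀ i r, ν.real {x | x i ∈ Set.Ici r} ≤ C * Real.exp (-r))
    (hI : ∀ i u v, u ≤ v → ν.real {x | x i ∈ Set.Icc u v} ≤ C' * (v - u))
    (hao : a o = 0) (hbo : b o = 0) (ha : ∀ i ≠ o, 0 < a i) :
    Tendsto (fun s : ℝ => s ^ 2 * ν.real ({x | x o ≤ 0} \ expSumLe a b s))
      atTop (nhds 0) := by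
  have h := ((tendsto_inv_atTop_zero (𝕜 := ℝ)).const_mul C').add
    (tendsto_sq_mul_measure_sdiff_expSumLe hT hao hbo ha)
  rw [mul_zero, add_zero] at h
  refine squeeze_zero' (Filter.Eventually.of_forall fun s => by positivity) ?_ h
  filter_upwards [eventually_gt_atTop 0] with s hs
  have hsub : {x | x o ≤ 0} \ expSumLe a b s ⊆
      {x | x o ∈ Set.Icc (-(s ^ 3)⁻¹) 0} ∪ ({x | x o ≤ -(s ^ 3)⁻¹} \ expSumLe a b s) := by
    rintro x ⟨hx0, hx⟩
    rcases le_total (x o) (-(s ^ 3)⁻¹) with h | h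
    · exact Or.inr ⟨h, hx⟩
    · exact Or.inl ⟨h, hx0⟩
  have hm := (measureReal_mono (μ := ν) hsub).trans (measureReal_union_le _ _)
  have hi := hI o (-(s ^ 3)⁻¹) 0 (neg_nonpos.mpr (by positivity))
  calc s ^ 2 * ν.real ({x | x o ≤ 0} \ expSumLe a b s)
      ≤ s ^ 2 * (C' * (0 - -(s ^ 3)⁻¹) +
          ν.real ({x | x o ≤ -(s ^ 3)⁻¹} \ expSumLe a b s)) := by
        gcongr
        linarith
    _ = _ := by field_simp; ring

lemma exists_div_le_setIntegral_expSumLe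
    {C c : ℝ} (hT : ∀ i r, ν.real {x | x i ∈ Set.Ici r} ≤ C * Real.exp (-r)) (hc : 0 < c)
    (hL : ∀ i u v, u ≤ v → -2 ≤ u → v ≤ 2 → c * (v - u) ≤ ν.real {x | x i ∈ Set.Icc u v})
    (hao : a o = 0) (hbo : b o = 0) (ha : ∀ i ≠ o, 0 < a i) {κ : ℝ} (hκ : 0 ≤ κ) :
    ∃ c' : ℝ, 0 < c' ∧ ∀ᶠ s in atTop,
      c' / s ≤ ∫ x in expSumLe a b s, Real.exp (κ * s * x o) ∂ν := by
  refine ⟨Real.exp (-(2 * κ)) * (c / 2), by positivity, ?_⟩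
  filter_upwards [(tendsto_sq_mul_measure_sdiff_expSumLe hT hao hbo ha).eventually_le_const
    (half_pos hc), eventually_ge_atTop 1] with s hs hs1
  have hs0 : 0 < s := by linarith
  set D := expSumLe a b s
  have hD : MeasurableSet D := measurableSet_expSumLe a b s
  set F : Set (ι → ℝ) := {x | x o ∈ Set.Icc (-2 / s) (-1 / s)}
  have hF : MeasurableSet F := measurableSet_Icc.preimage (measurable_pi_apply o)
  have hFsub : F ⊆ (D ∩ F) ∪ ({x | x o ≤ -(s ^ 3)⁻¹} \ D) := fun x hx => by
    by_cases hxD : x ∈ D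
    · exact Or.inl ⟨hxD, hx⟩
    · refine Or.inr ⟨le_trans hx.2 ?_, hxD⟩
      rw [neg_div, one_div]
      exact neg_le_neg (inv_anti₀ hs0 (le_self_pow₀ hs1 (by norm_num)))
  have hFν : c * (1 / s) ≤ ν.real F := by
    have := hL o (-2 / s) (-1 / s) (by gcongr; norm_num)
      (by rw [le_div_iff₀ hs0]; linarith)
      ((div_nonpos_of_nonpos_of_nonneg (by norm_num) hs0.le).trans (by norm_num))
    calc c * (1 / s) = c * (-1 / s - -2 / s) := by ring
      _ ≤ _ := this
  have hE : ν.real ({x | x o ≤ -(s ^ 3)⁻¹} \ D) ≤ c / 2 / s := by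
    rw [le_div_iff₀ hs0]
    refine le_trans ?_ hs
    rw [mul_comm]
    gcongr
    exact le_self_pow₀ hs1 (by norm_num)
  have hDF : c / 2 / s ≤ ν.real (D ∩ F) := by
    have := (measureReal_mono (μ := ν) hFsub).trans (measureReal_union_le _ _)
    have e : c * (1 / s) = c / 2 / s + c / 2 / s := by ring
    linarith
  have hint : IntegrableOn (fun x => Real.exp (κ * s * x o)) D ν := by
    refine Measure.integrableOn_of_bounded (M := 1) (measure_ne_top _ _)
      (Measurable.aestronglyMeasurable (by fun_prop)) ?_
    refine (ae_restrict_iff' hD).mpr (Filter.Eventually.of_forall fun x hx => ?_)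
    rw [Real.norm_of_nonneg (Real.exp_pos _).le, Real.exp_le_one_iff]
    exact mul_nonpos_of_nonneg_of_nonpos (by positivity) (expSumLe_subset hao hbo s hx)
  calc Real.exp (-(2 * κ)) * (c / 2) / s ≤ Real.exp (-(2 * κ)) * ν.real (D ∩ F) := by
        rw [mul_div_assoc]
        gcongr
    _ = ∫ x in D ∩ F, Real.exp (-(2 * κ)) ∂ν := by
        rw [setIntegral_const, smul_eq_mul, mul_comm]
    _ ≤ ∫ x in D ∩ F, Real.exp (κ * s * x o) ∂ν := by
        refine setIntegral_mono_on (integrableOn_const (measure_ne_top _ _))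
          (hint.mono_set Set.inter_subset_left) (hD.inter hF) fun x hx => ?_
        refine Real.exp_le_exp.mpr ?_
        have h2 : -2 ≤ x o * s := (div_le_iff₀ hs0).mp hx.2.1
        nlinarith
    _ ≤ ∫ x in D, Real.exp (κ * s * x o) ∂ν :=
        setIntegral_mono_set hint (Filter.Eventually.of_forall fun x => (Real.exp_pos _).le)
          (Filter.Eventually.of_forall Set.inter_subset_left)

end TailAsymptotics

lemma integral_centered_indicator_sub_sq_le {Ω : Type*} [MeasurableSpace Ω] {ν : Measure Ω}
    [IsFiniteMeasure ν] {B H : Set Ω} (hB : MeasurableSet B) (hH : MeasurableSet H) (hBH : B ⊆ H)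
    {h : Ω → ℝ} (hm : Measurable h) (h0 : ∀ x ∈ H, 0 ≤ h x) (h1 : ∀ x ∈ H, h x ≤ 1) :
    ∫ x, (B.indicator h x - H.indicator h x + ∫ y in H, h y ∂ν - ∫ y in B, h y ∂ν) ^ 2 ∂ν ≤
      2 * ν.real (H \ B) * (1 + ν.real Set.univ * ν.real (H \ B)) := by
  have hint : IntegrableOn h H ν := by
    refine Measure.integrableOn_of_bounded (M := 1) (measure_ne_top _ _)
      hm.aestronglyMeasurable ?_
    refine (ae_restrict_iff' hH).mpr (Filter.Eventually.of_forall fun x hx => ?_)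
    rw [Real.norm_of_nonneg (h0 x hx)]
    exact h1 x hx
  have hdiff : (∫ y in H, h y ∂ν) - ∫ y in B, h y ∂ν = ∫ y in H \ B, h y ∂ν :=
    (setIntegral_sdiff hB hint hBH).symm
  set J := ∫ y in H \ B, h y ∂ν
  have hJ0 : 0 ≤ J := setIntegral_nonneg (hH.diff hB) fun x hx => h0 x hx.1
  have hJ1 : J ≤ ν.real (H \ B) := by
    calc J ≤ ∫ y in H \ B, 1 ∂ν :=
          setIntegral_mono_on (hint.mono_set Set.sdiff_subset)
            (integrableOn_const (measure_ne_top _ _)) (hH.diff hB) fun x hx => h1 x hx.1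
      _ = _ := by simp
  have hpt (x : Ω) : (B.indicator h x - H.indicator h x + ∫ y in H, h y ∂ν -
      ∫ y in B, h y ∂ν) ^ 2 ≤ (H \ B).indicator (fun _ => 2) x + 2 * ν.real (H \ B) ^ 2 := by
    rw [add_sub_assoc, hdiff]
    have hJsq : J ^ 2 ≤ ν.real (H \ B) ^ 2 := pow_le_pow_left₀ hJ0 hJ1 2
    by_cases hxB : x ∈ B
    · have hxH := hBH hxB
      have : x ∉ H \ B := fun h => h.2 hxB
      rw [Set.indicator_of_mem hxB, Set.indicator_of_mem hxH, Set.indicator_of_notMem this]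
      nlinarith
    · by_cases hxH : x ∈ H
      · have : x ∈ H \ B := ⟨hxH, hxB⟩
        rw [Set.indicator_of_notMem hxB, Set.indicator_of_mem hxH, Set.indicator_of_mem this]
        nlinarith [h0 x hxH, h1 x hxH, mul_nonneg (h0 x hxH) hJ0]
      · have : x ∉ H \ B := fun h => hxH h.1
        rw [Set.indicator_of_notMem hxB, Set.indicator_of_notMem hxH,
          Set.indicator_of_notMem this]
        nlinarith
  have hi : Integrable ((H \ B).indicator fun _ => (2 : ℝ)) ν :=
    (integrable_const _).indicator (hH.diff hB)
  refine (integral_mono_of_nonneg (Filter.Eventually.of_forall fun x => sq_nonneg _)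
    (hi.add (integrable_const _)) (Filter.Eventually.of_forall hpt)).trans_eq ?_
  simp only [Pi.add_apply]
  rw [integral_add hi (integrable_const _), integral_indicator (hH.diff hB)]
  simp only [integral_const, measureReal_restrict_apply_univ, smul_eq_mul]
  ring

lemma tendsto_controlVariate_ratio {ι : Type*} [Fintype ι] [DecidableEq ι]
    {ν : Measure (ι → ℝ)} [IsFiniteMeasure ν] {o : ι} {a b : ι → ℝ} {C C' c : ℝ}
    (hT : ∀ i r, ν.real {x | x i ∈ Set.Ici r} ≤ C * Real.exp (-r))
    (hI : ∀ i u v, u ≤ v → ν.real {x | x i ∈ Set.Icc u v} ≤ C' * (v - u)) (hc : 0 < c)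
    (hL : ∀ i u v, u ≤ v → -2 ≤ u → v ≤ 2 → c * (v - u) ≤ ν.real {x | x i ∈ Set.Icc u v})
    (hao : a o = 0) (hbo : b o = 0) (ha : ∀ i ≠ o, 0 < a i) {κ : ℝ} (hκ : 0 ≤ κ) :
    Tendsto (fun s : ℝ =>
      (∫ x, ((expSumLe a b s).indicator (fun x => Real.exp (κ * s * x o)) x -
          {x : ι → ℝ | x o ≤ 0}.indicator (fun x => Real.exp (κ * s * x o)) x +
          ∫ y in {x : ι → ℝ | x o ≤ 0}, Real.exp (κ * s * y o) ∂ν -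
          ∫ y in expSumLe a b s, Real.exp (κ * s * y o) ∂ν) ^ 2 ∂ν) /
        (∫ y in expSumLe a b s, Real.exp (κ * s * y o) ∂ν) ^ 2) atTop (nhds 0) := by
  obtain ⟨c', hc', hlow⟩ := exists_div_le_setIntegral_expSumLe hT hc hL hao hbo ha hκ
  have hu := tendsto_sq_mul_measure_nonpos_sdiff_expSumLe hT hI hao hbo ha
  set u : ℝ → ℝ := fun s => s ^ 2 * ν.real ({x | x o ≤ 0} \ expSumLe a b s)
  have hlim : Tendsto (fun s => 2 / c' ^ 2 * (u s * (1 + ν.real Set.univ * u s)))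
      atTop (nhds 0) := by
    simpa using (hu.mul ((hu.const_mul (ν.real Set.univ)).const_add 1)).const_mul (2 / c' ^ 2)
  refine squeeze_zero' (Filter.Eventually.of_forall fun s =>
    div_nonneg (integral_nonneg fun x => sq_nonneg _) (sq_nonneg _)) ?_ hlim
  filter_upwards [hlow, eventually_ge_atTop 1] with s hs hs1
  have hs0 : 0 < s := by linarith
  have hV := integral_centered_indicator_sub_sq_le (ν := ν) (measurableSet_expSumLe a b s)
    (measurableSet_le (measurable_pi_apply o) measurable_const) (expSumLe_subset hao hbo s)
    (h := fun x => Real.exp (κ * s * x o)) (by fun_prop) (fun x _ => (Real.exp_pos _).le)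
    (fun x hx => Real.exp_le_one_iff.mpr
      (mul_nonpos_of_nonneg_of_nonpos (by positivity) hx))
  set p := ν.real ({x | x o ≤ 0} \ expSumLe a b s)
  have hp : 0 ≤ p := measureReal_nonneg
  have hpu : p ≤ u s := le_mul_of_one_le_left hp (one_le_pow₀ hs1)
  calc _ ≤ 2 * p * (1 + ν.real Set.univ * p) / (c' / s) ^ 2 := by
        gcongr
    _ = 2 / c' ^ 2 * (u s * (1 + ν.real Set.univ * p)) := by
        rw [show u s = s ^ 2 * p from rfl]
        field_simp
    _ ≤ _ := by gcongr

lemma integral_mul_mvnPdf {n : ℕ} (μ : Fin n → ℝ) (S : Matrix (Fin n) (Fin n) ℝ)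
    (F : (Fin n → ℝ) → ℝ) :
    ∫ y, F y * mvnPdf μ S y = ∫ x, F (x + μ) ∂centeredMvn S := by
  rw [centeredMvn, integral_withDensity_eq_integral_toReal_smul
    (continuous_mvnPdf 0 S).measurable.ennreal_ofReal
    (Filter.Eventually.of_forall fun x => ENNReal.ofReal_lt_top),
    ← integral_add_right_eq_self _ μ]
  congr 1 with x
  have h0 : 0 ≤ mvnPdf 0 S x := div_nonneg (Real.exp_pos _).le (Real.sqrt_nonneg _)
  rw [ENNReal.toReal_ofReal h0, smul_eq_mul, mul_comm]
  simp [mvnPdf]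

lemma mvnPdf_pos {n : ℕ} (μ : Fin n → ℝ) {S : Matrix (Fin n) (Fin n) ℝ} (hS : S.PosDef)
    (y : Fin n → ℝ) : 0 < mvnPdf μ S y :=
  div_pos (Real.exp_pos _) (Real.sqrt_pos.mpr (mul_pos (by positivity) hS.det_pos))

lemma mvnPdf_div_mvnPdf_shift_col {n : ℕ} (m : Fin n → ℝ) {S : Matrix (Fin n) (Fin n) ℝ}
    (hS : S.PosDef) (k : Fin n) (r : ℝ) (x : Fin n → ℝ) :
    mvnPdf m S (x + (m + r • S.col k)) / mvnPdf (m + r • S.col k) S (x + (m + r • S.col k)) =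
      Real.exp (-(r * x k) - r ^ 2 * S k k / 2) := by
  have hSdet : IsUnit S.det := isUnit_iff_ne_zero.mpr hS.det_pos.ne'
  have hcol : S⁻¹.mulVec (r • S.col k) = Pi.single k r := by
    rw [← Matrix.mulVec_single_one, ← Matrix.mulVec_smul, Matrix.mulVec_mulVec,
      Matrix.nonsing_inv_mul S hSdet, Matrix.one_mulVec, ← Pi.single_smul, smul_eq_mul, mul_one]
  have hsymm : S⁻¹ᵀ = S⁻¹ := by
    have := hS.inv.isHermitian
    rwa [Matrix.IsHermitian, Matrix.conjTranspose_eq_transpose_of_trivial] at this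
  have hq : (x + r • S.col k) ⬝ᵥ S⁻¹.mulVec (x + r • S.col k) =
      x ⬝ᵥ S⁻¹.mulVec x + (2 * (r * x k) + r ^ 2 * S k k) := by
    have hcross : (r • S.col k) ⬝ᵥ S⁻¹.mulVec x = x k * r := by
      rw [Matrix.dotProduct_mulVec, ← Matrix.mulVec_transpose, hsymm, hcol, single_dotProduct,
        mul_comm]
    rw [Matrix.mulVec_add, add_dotProduct, dotProduct_add, dotProduct_add, hcol, hcross,
      dotProduct_single, dotProduct_single, Pi.smul_apply, Matrix.col_apply, smul_eq_mul]
    ring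
  rw [div_eq_iff (mvnPdf_pos _ hS _).ne', mvnPdf, mvnPdf, add_sub_cancel_right,
    show x + (m + r • S.col k) - m = x + r • S.col k by abel, hq, ← mul_div_assoc, ← Real.exp_add]
  congr 2
  ring

lemma Matrix.PosDef.lt_of_sqrt_lt_corr {n : ℕ} {S : Matrix (Fin n) (Fin n) ℝ} (hS : S.PosDef)
    {k j : Fin n} (h : √(S k k) < S k j / √(S k k * S j j) * √(S j j)) : S k k < S j k := by
  have hk := Real.sqrt_pos.mpr (hS.diag_pos (i := k))
  have hj := Real.sqrt_pos.mpr (hS.diag_pos (i := j))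
  rw [Real.sqrt_mul hS.diag_pos.le, ← div_div, div_mul_cancel₀ _ hj.ne', lt_div_iff₀ hk,
    Real.mul_self_sqrt hS.diag_pos.le] at h
  have hsymm : S j k = S k j := by simpa using hS.isHermitian.apply k j
  rwa [hsymm]

theorem stmt17 {n : ℕ} (m : Fin (n + 1) → ℝ) (S : Matrix (Fin (n + 1)) (Fin (n + 1)) ℝ)
    (hS : S.PosDef)
    (hA : ∀ j : Fin (n + 1), j ≠ 0 →
      Real.sqrt (S 0 0) < S 0 j / Real.sqrt (S 0 0 * S j j) * Real.sqrt (S j j))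
    (a : Fin (n + 1) → ℝ) (ha : ∀ i, a i = S i 0 / S 0 0 - 1)
    (c : Fin (n + 1) → ℝ) (hc : ∀ i, c i = Real.exp (m i - S i 0 / S 0 0 * m 0))
    (i₀ : Fin (n + 1)) (hi₀ : i₀ ≠ 0)
    (hmax : ∀ᶠ γ in nhdsWithin (0 : ℝ) (Set.Ioi 0),
      ∀ i : Fin (n + 1), i ≠ 0 → c i * γ ^ (a i) ≤ c i₀ * γ ^ (a i₀)) :
    let Λ : ℝ → Fin (n + 1) → ℝ := fun γ k =>
      if k = 0 then Real.log γ - m 0 else S k 0 / S 0 0 * (Real.log γ - m 0)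
    let g : ℝ → (Fin (n + 1) → ℝ) → ℝ := fun γ y => mvnPdf (m + Λ γ) S y
    let L : ℝ → (Fin (n + 1) → ℝ) → ℝ := fun γ y => mvnPdf m S y / g γ y
    let T : ℝ → (Fin (n + 1) → ℝ) → ℝ := fun γ y =>
      Set.indicator {y : Fin (n + 1) → ℝ | ∑ i, Real.exp (y i) ≤ γ} (fun _ => (1 : ℝ)) y *
        L γ y
    let Z : ℝ → (Fin (n + 1) → ℝ) → ℝ := fun γ y =>
      Set.indicator {y : Fin (n + 1) → ℝ | Real.exp (y 0) ≤ γ} (fun _ => (1 : ℝ)) y * L γ y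
    let α : ℝ → ℝ := fun γ => ∫ y : Fin (n + 1) → ℝ, T γ y * g γ y
    let P : ℝ → ℝ := fun γ => ∫ y : Fin (n + 1) → ℝ, Z γ y * g γ y
    let varT' : ℝ → ℝ := fun γ =>
      ∫ y : Fin (n + 1) → ℝ, (T γ y - Z γ y + P γ - α γ) ^ 2 * g γ y
    Filter.Tendsto (fun γ : ℝ => varT' γ / α γ ^ 2) (nhdsWithin 0 (Set.Ioi 0)) (nhds 0) ∧
    ∃ C₄ : ℝ, ∃ o : ℝ → ℝ, Filter.Tendsto o (nhdsWithin 0 (Set.Ioi 0)) (nhds 0) ∧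
      ∀ᶠ γ in nhdsWithin (0 : ℝ) (Set.Ioi 0),
        varT' γ / α γ ^ 2 ≤
          C₄ * γ ^ (a i₀ / 2) * Real.log (1 / γ) ^ ((3 : ℝ) / 2) + o γ := by
  intro Λ g L T Z α P varT'
  have hS0 : 0 < S 0 0 := hS.diag_pos
  have hfin := isFiniteMeasure_centeredMvn hS
  obtain ⟨C, hI⟩ := exists_centeredMvn_Icc_le hS
  obtain ⟨C', hT⟩ := exists_centeredMvn_Ici_le hS
  obtain ⟨c', hc', hL⟩ := exists_le_centeredMvn_Icc hS 2
  set b : Fin (n + 1) → ℝ := fun i => m i - m 0 with hb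
  have ha0 : a 0 = 0 := by rw [ha, div_self hS0.ne', sub_self]
  have hapos : ∀ i ≠ 0, 0 < a i := fun i hi => by
    rw [ha, sub_pos, one_lt_div hS0]
    exact hS.lt_of_sqrt_lt_corr (hA i hi)
  have hb0 : b 0 = 0 := sub_self _
  have hlim := tendsto_controlVariate_ratio hT hI hc' hL ha0 hb0 hapos (inv_nonneg.mpr hS0.le)
  have hshift : Tendsto (fun γ : ℝ => m 0 - Real.log γ) (nhdsWithin 0 (Set.Ioi 0)) atTop :=
    tendsto_atTop_add_const_left _ _ (tendsto_neg_atBot_atTop.comp Real.tendsto_log_nhdsGT_zero)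
  have hratio : Tendsto (fun γ : ℝ => varT' γ / α γ ^ 2) (nhdsWithin 0 (Set.Ioi 0)) (nhds 0) := by
    refine (hlim.comp hshift).congr' ?_
    filter_upwards [self_mem_nhdsWithin] with γ hγ
    have hγ : 0 < γ := hγ
    set s := m 0 - Real.log γ with hs
    set h : (Fin (n + 1) → ℝ) → ℝ := fun x => Real.exp ((S 0 0)⁻¹ * s * x 0) with hh
    set D := expSumLe a b s with hD
    set H : Set (Fin (n + 1) → ℝ) := {x | x 0 ≤ 0} with hH
    set M := Real.exp (-(s ^ 2 / (2 * S 0 0))) with hM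
    have hΛ : Λ γ = (-s / S 0 0) • S.col 0 := by
      ext k
      simp only [Λ, Pi.smul_apply, Matrix.col_apply, smul_eq_mul, hs]
      split_ifs with hk
      · subst hk
        field_simp
        ring
      · field_simp
        ring
    have hLx (x : Fin (n + 1) → ℝ) : L γ (x + (m + Λ γ)) = M * h x := by
      simp only [L, g, hΛ]
      rw [mvnPdf_div_mvnPdf_shift_col m hS, hM, hh, ← Real.exp_add]
      congr 1
      field_simp
      ring
    have hcoord (x : Fin (n + 1) → ℝ) (i : Fin (n + 1)) :
        Real.exp ((x + (m + Λ γ)) i) = γ * Real.exp (x i + b i - a i * s) := by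
      nth_rewrite 2 [← Real.exp_log hγ]
      rw [← Real.exp_add, hΛ, ha]
      congr 1
      simp only [Pi.add_apply, Pi.smul_apply, Matrix.col_apply, smul_eq_mul, hs, hb]
      field_simp
      ring
    have hTx (x : Fin (n + 1) → ℝ) : T γ (x + (m + Λ γ)) = M * D.indicator h x := by
      have hmem : x + (m + Λ γ) ∈ {y : Fin (n + 1) → ℝ | ∑ i, Real.exp (y i) ≤ γ} ↔ x ∈ D := by
        simp only [hD, expSumLe, Set.mem_ofPred_eq, hcoord, ← Finset.mul_sum,
          mul_le_iff_le_one_right hγ]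
      simp only [T, hLx]
      by_cases hx : x ∈ D
      · rw [Set.indicator_of_mem (hmem.mpr hx), Set.indicator_of_mem hx, one_mul]
      · rw [Set.indicator_of_notMem (mt hmem.mp hx), Set.indicator_of_notMem hx, zero_mul, mul_zero]
    have hZx (x : Fin (n + 1) → ℝ) : Z γ (x + (m + Λ γ)) = M * H.indicator h x := by
      have hmem : x + (m + Λ γ) ∈ {y : Fin (n + 1) → ℝ | Real.exp (y 0) ≤ γ} ↔ x ∈ H := by
        simp only [hH, Set.mem_ofPred_eq, hcoord, mul_le_iff_le_one_right hγ, ha0, hb0,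
          zero_mul, add_zero, sub_zero, Real.exp_le_one_iff]
      simp only [Z, hLx]
      by_cases hx : x ∈ H
      · rw [Set.indicator_of_mem (hmem.mpr hx), Set.indicator_of_mem hx, one_mul]
      · rw [Set.indicator_of_notMem (mt hmem.mp hx), Set.indicator_of_notMem hx, zero_mul, mul_zero]
    have hDm : MeasurableSet D := measurableSet_expSumLe a b s
    have hHm : MeasurableSet H := measurableSet_le (measurable_pi_apply 0) measurable_const
    have hα : α γ = M * ∫ x in D, h x ∂centeredMvn S := by
      simp only [α, g, integral_mul_mvnPdf, hTx]
      rw [integral_const_mul, integral_indicator hDm]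
    have hP : P γ = M * ∫ x in H, h x ∂centeredMvn S := by
      simp only [P, g, integral_mul_mvnPdf, hZx]
      rw [integral_const_mul, integral_indicator hHm]
    have hvar : varT' γ = M ^ 2 * ∫ x, (D.indicator h x - H.indicator h x +
        ∫ y in H, h y ∂centeredMvn S - ∫ y in D, h y ∂centeredMvn S) ^ 2 ∂centeredMvn S := by
      simp only [varT']
      rw [integral_mul_mvnPdf (m + Λ γ) S fun y => (T γ y - Z γ y + P γ - α γ) ^ 2,
        ← integral_const_mul]
      congr 1 with x
      rw [hTx, hZx, hα, hP]
      ring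
    rw [hvar, hα, mul_pow, mul_div_mul_left _ _ (pow_ne_zero 2 (Real.exp_pos _).ne')]
    rfl
  exact ⟨hratio, 0, _, hratio, Filter.Eventually.of_forall fun γ => by simp⟩
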